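/- arXiv:1912.01477 — 2 statements merged into one kernel-verified Lean document; each statement's English description precedes it below -/
import Mathlib

section
/- Let a > 0, b > 0 and 0 < ε₀ < 1, and define f(x) = (1/(a·x²))·((1 + b·x + a·x²)^{ε₀} − 1 − b·x). Then the required-coding-bits function K_req(x) = log₂ π − log₂ (arccos √(max(f(x), 0))) tends to 1 as x → ∞. -/
/-!
For `x ≥ 1` the base `1 + b x + a x²` is at most `(1 + b + a) x²`, so the positive part of `f(x)`
lies between `0` and `((1 + b + a)^ε₀ / a) (x²)^(-(1 - ε₀))`, which tends to `0` because `ε₀ < 1`.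
As `arccos ∘ √` is continuous with value `π / 2 ≠ 0` at `0`, and `logb 2` is continuous away from
`0`, the limit is `logb 2 π - logb 2 (π / 2) = logb 2 2 = 1`.
-/

open Real Filter

theorem tendsto_posPart_f (a b ε₀ : ℝ) (ha : 0 < a) (hb : 0 < b) (hε0 : 0 < ε₀) (hε1 : ε₀ < 1) :
    Tendsto (fun x : ℝ =>
        max ((1 / (a * x ^ 2)) * ((1 + b * x + a * x ^ 2) ^ ε₀ - 1 - b * x)) 0)
      atTop (nhds 0) := by
  have hlim : Tendsto (fun x : ℝ => (1 + b + a) ^ ε₀ / a * (x ^ 2) ^ (-(1 - ε₀)))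
      atTop (nhds 0) := by
    have h := (tendsto_rpow_neg_atTop (sub_pos.mpr hε1)).comp
      (tendsto_pow_atTop (α := ℝ) two_ne_zero)
    simpa using h.const_mul ((1 + b + a) ^ ε₀ / a)
  refine squeeze_zero' (Eventually.of_forall fun x => le_max_right _ _) ?_ hlim
  filter_upwards [eventually_ge_atTop 1] with x hx
  have hx0 : 0 < x := by linarith
  refine max_le ?_ (by positivity)
  have hbase : 1 + b * x + a * x ^ 2 ≤ (1 + b + a) * x ^ 2 := by
    nlinarith [mul_nonneg hb.le (mul_nonneg hx0.le (sub_nonneg.mpr hx))]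
  have hpow : (1 + b * x + a * x ^ 2) ^ ε₀ ≤ (1 + b + a) ^ ε₀ * (x ^ 2) ^ ε₀ := by
    rw [← Real.mul_rpow (by positivity) (by positivity)]
    exact Real.rpow_le_rpow (by positivity) hbase hε0.le
  have hexp : (x ^ 2) ^ (-(1 - ε₀)) = (x ^ 2) ^ ε₀ / x ^ 2 := by
    rw [neg_sub, Real.rpow_sub_one (by positivity)]
  calc (1 / (a * x ^ 2)) * ((1 + b * x + a * x ^ 2) ^ ε₀ - 1 - b * x)
      ≤ (1 / (a * x ^ 2)) * ((1 + b + a) ^ ε₀ * (x ^ 2) ^ ε₀) := by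
        gcongr
        linarith [mul_pos hb hx0]
    _ = (1 + b + a) ^ ε₀ / a * (x ^ 2) ^ (-(1 - ε₀)) := by
        rw [hexp]
        field_simp

/-- For `a, b > 0` and `0 < ε₀ < 1`, with
`f(x) = (1/(a x²)) ((1 + b x + a x²)^{ε₀} − 1 − b x)`, the required-coding-bits function
`K_req(x) = log₂ π − log₂ (arccos √(max (f x) 0))` tends to `1` as `x → ∞`. -/
theorem stmt8 (a b ε₀ : ℝ) (ha : 0 < a) (hb : 0 < b) (hε0 : 0 < ε₀) (hε1 : ε₀ < 1) :
    Filter.Tendsto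
      (fun x : ℝ =>
        Real.logb 2 π -
          Real.logb 2 (Real.arccos (Real.sqrt
            (max ((1 / (a * x ^ 2)) * ((1 + b * x + a * x ^ 2) ^ ε₀ - 1 - b * x)) 0))))
      Filter.atTop (nhds 1) := by
  have hcont : Continuous fun y : ℝ => Real.arccos (Real.sqrt y) :=
    Real.continuous_arccos.comp Real.continuous_sqrt
  have harccos := (hcont.tendsto 0).comp (tendsto_posPart_f a b ε₀ ha hb hε0 hε1)
  rw [Real.sqrt_zero, Real.arccos_zero] at harccos
  have hlog := harccos.logb (b := 2) (by positivity)
  have hone : Real.logb 2 π - Real.logb 2 (π / 2) = 1 := by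
    rw [Real.logb_div Real.pi_ne_zero two_ne_zero, Real.logb_self_eq_one one_lt_two]
    ring
  have hmain := hlog.const_sub (Real.logb 2 π)
  rw [hone] at hmain
  exact hmain
end

section
/- Let g and g' be real numbers with 0 < g' < g. Then the function x ↦ log(1 + g'·x) / log(1 + g·x) is monotone increasing on (0, ∞); moreover it tends to g'/g as x → 0⁺ and tends to 1 as x → ∞. -/
open Real Filter Set

/-!
Monotonicity: with `u = 1 + g' x < v = 1 + g x`, the derivative of the quotient is positive iff
`u log u / (u - 1) < v log v / (v - 1)`. These are the slopes of secants through `1` of the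
strictly convex function `t ↦ t log t`, so they increase with the endpoint.

At `0⁺`, divide numerator and denominator by `x` and use the derivative of `log (1 + c x)` at `0`.
At `∞`, `0 ≤ log v - log u ≤ log (g / g')` while `log v → ∞`.
-/

/-- The numerator of the derivative of the quotient of logarithms is positive. -/
lemma deriv_numerator_pos {g g' x : ℝ} (hg' : 0 < g') (hgg : g' < g) (hx : 0 < x) :
    0 < g' / (1 + g' * x) * log (1 + g * x) - log (1 + g' * x) * (g / (1 + g * x)) := by
  have hg : 0 < g := hg'.trans hgg
  have h1 : 0 < g' * x := by positivity
  have h2 : 0 < g * x := by positivity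
  have hlt : g' * x < g * x := by gcongr
  have key := strictConvexOn_mul_log.secant_strict_mono (a := 1) (x := 1 + g' * x)
    (y := 1 + g * x) (by simp) (by simp only [mem_Ici]; linarith)
    (by simp only [mem_Ici]; linarith) (by linarith) (by linarith) (by linarith)
  simp only [log_one, mul_zero, sub_zero, add_sub_cancel_left] at key
  rw [div_lt_div_iff₀ h1 h2] at key
  have hu : 0 < 1 + g' * x := by linarith
  have hv : 0 < 1 + g * x := by linarith
  have e : g' / (1 + g' * x) * log (1 + g * x) - log (1 + g' * x) * (g / (1 + g * x)) =
      ((1 + g * x) * log (1 + g * x) * (g' * x) - (1 + g' * x) * log (1 + g' * x) * (g * x)) /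
        (x * (1 + g' * x) * (1 + g * x)) := by
    field_simp
  rw [e]
  exact div_pos (by linarith) (by positivity)

lemma hasDerivAt_log_one_add_mul {c x : ℝ} (h : 1 + c * x ≠ 0) :
    HasDerivAt (fun x : ℝ => log (1 + c * x)) (c / (1 + c * x)) x := by
  have := (((hasDerivAt_id x).const_mul c).const_add 1).log h
  simpa using this

lemma tendsto_log_one_add_mul_div (c : ℝ) :
    Tendsto (fun x : ℝ => log (1 + c * x) / x) (nhdsWithin 0 (Ioi 0)) (nhds c) := by
  have h := (hasDerivAt_log_one_add_mul (c := c) (x := 0) (by simp)).tendsto_slope_zero_right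
  simpa [div_eq_inv_mul] using h

/-- For `0 < g' < g`, the function `x ↦ log(1 + g' x)/log(1 + g x)` is
monotone increasing on `(0, ∞)`, tends to `g'/g` as `x → 0⁺`, and tends to `1` as `x → ∞`. -/
theorem stmt10 (g g' : ℝ) (hg' : 0 < g') (hgg : g' < g) :
    StrictMonoOn (fun x : ℝ => Real.log (1 + g' * x) / Real.log (1 + g * x)) (Set.Ioi 0) ∧
    Filter.Tendsto (fun x : ℝ => Real.log (1 + g' * x) / Real.log (1 + g * x))
      (nhdsWithin 0 (Set.Ioi 0)) (nhds (g' / g)) ∧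
    Filter.Tendsto (fun x : ℝ => Real.log (1 + g' * x) / Real.log (1 + g * x))
      Filter.atTop (nhds 1) := by
  have hg : 0 < g := hg'.trans hgg
  have hlog : ∀ x : ℝ, 0 < x → 0 < log (1 + g * x) := fun x hx =>
    log_pos (by linarith [mul_pos hg hx])
  refine ⟨?_, ?_, ?_⟩
  · have hd : ∀ x ∈ Ioi (0 : ℝ), HasDerivAt
        (fun x : ℝ => log (1 + g' * x) / log (1 + g * x))
        ((g' / (1 + g' * x) * log (1 + g * x) - log (1 + g' * x) * (g / (1 + g * x))) /
          log (1 + g * x) ^ 2) x := by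
      intro x hx
      have hx : 0 < x := hx
      exact (hasDerivAt_log_one_add_mul (by positivity)).div
        (hasDerivAt_log_one_add_mul (by positivity)) (hlog x hx).ne'
    refine strictMonoOn_of_deriv_pos (convex_Ioi 0)
      (fun x hx => (hd x hx).continuousAt.continuousWithinAt) ?_
    intro x hx
    rw [interior_Ioi] at hx
    rw [(hd x hx).deriv]
    exact div_pos (deriv_numerator_pos hg' hgg hx) (pow_pos (hlog x hx) 2)
  · refine ((tendsto_log_one_add_mul_div g').div (tendsto_log_one_add_mul_div g)
      hg.ne').congr' ?_
    filter_upwards [self_mem_nhdsWithin] with x hx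
    exact div_div_div_cancel_right₀ (ne_of_gt hx) _ _
  · have hinf : Tendsto (fun x : ℝ => log (1 + g * x)) atTop atTop :=
      tendsto_log_atTop.comp
        (tendsto_atTop_add_const_left _ 1 (tendsto_id.const_mul_atTop hg))
    have hlow : Tendsto (fun x : ℝ => 1 - log (g / g') / log (1 + g * x)) atTop (nhds 1) := by
      simpa using (hinf.const_div_atTop (log (g / g'))).const_sub 1
    refine tendsto_of_tendsto_of_tendsto_of_le_of_le' hlow tendsto_const_nhds ?_ ?_
    · filter_upwards [eventually_gt_atTop 0] with x hx
      have hL := hlog x hx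
      have hu : 0 < 1 + g' * x := by positivity
      have hle : log (1 + g * x) ≤ log (g / g') + log (1 + g' * x) := by
        rw [← log_mul (by positivity) hu.ne']
        apply log_le_log (by positivity)
        have h1 : 1 ≤ g / g' := (one_le_div hg').2 hgg.le
        have h2 : g / g' * (1 + g' * x) = g / g' + g * x := by field_simp
        linarith
      rw [le_div_iff₀ hL, sub_mul, div_mul_cancel₀ _ hL.ne']
      linarith
    · filter_upwards [eventually_gt_atTop 0] with x hx
      rw [div_le_one (hlog x hx)]
      exact log_le_log (by positivity) (by gcongr)
end
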